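/- Let Σ be a pure (d-1)-dimensional vertex-decomposable simplicial complex and let σ ∈ Σ be a face with |σ| = i. Then the link lk(σ,Σ) is a pure (d-i-1)-dimensional vertex-decomposable simplicial complex. -/

import Mathlib

/-- An abstract simplicial complex on vertex type `V`: a collection of finite
subsets (faces) containing the empty set and closed under taking subsets. -/
def IsComplex {V : Type*} (K : Set (Finset V)) : Prop :=
  ∅ ∈ K ∧ ∀ σ ∈ K, ∀ τ ⊆ σ, τ ∈ K

/-- The link `lk(σ,Σ) = {τ ∈ Σ : τ ∩ σ = ∅ ∧ τ ∪ σ ∈ Σ}`. -/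
def linkC {V : Type*} [DecidableEq V] (K : Set (Finset V)) (σ : Finset V) :
    Set (Finset V) :=
  {τ ∈ K | τ ∩ σ = ∅ ∧ τ ∪ σ ∈ K}

/-- The deletion `Σ \ {v}`: all faces of `Σ` not containing `v`. -/
def delV {V : Type*} (K : Set (Finset V)) (v : V) : Set (Finset V) :=
  {σ ∈ K | v ∉ σ}

/-- `σ` is a facet (maximal face) of `K`. -/
def IsFacet {V : Type*} (K : Set (Finset V)) (σ : Finset V) : Prop :=
  σ ∈ K ∧ ∀ τ ∈ K, σ ⊆ τ → σ = τ

/-- `K` is pure `(d-1)`-dimensional: every facet has exactly `d` elements. -/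
def PureD {V : Type*} (K : Set (Finset V)) (d : ℕ) : Prop :=
  ∀ σ, IsFacet K σ → σ.card = d

/-- `K` is the `(d-1)`-simplex: the family of all subsets of a fixed
`d`-element set (for `d = 0` this is the complex `{∅}`). -/
def IsSimplexOn {V : Type*} (K : Set (Finset V)) (d : ℕ) : Prop :=
  ∃ S : Finset V, S.card = d ∧ K = {σ | σ ⊆ S}

/-- Vertex-decomposability for a pure `(d-1)`-dimensional complex (facets of
cardinality `d`): either a `(d-1)`-simplex, or there is a shedding vertex `v`
with `K \ {v}` vertex-decomposable of the same dimension and `lk({v},K)`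
vertex-decomposable of dimension one less. -/
inductive VD {V : Type*} [DecidableEq V] : ℕ → Set (Finset V) → Prop
  | simplex (d : ℕ) (K : Set (Finset V)) (h : IsSimplexOn K d) : VD d K
  | shed (d : ℕ) (K : Set (Finset V)) (v : V) (hK : IsComplex K)
      (hp : PureD K d) (hv : ({v} : Finset V) ∈ K)
      (hdel : VD d (delV K v)) (hlink : VD (d - 1) (linkC K {v})) : VD d K

/-!
Induction on vertex-decomposability. The link of a face in a simplex is a simplex. Otherwise let
`v` be a shedding vertex of `K`. If `v ∈ σ`, then `lk(σ, K) = lk(σ \ {v}, lk({v}, K))`, and the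
induction hypothesis for `lk({v}, K)` applies. If `v ∉ σ`, then
`lk(σ, K) \ {v} = lk(σ, K \ {v})` is vertex-decomposable by induction; either `σ ∪ {v}` is a face,
and then `v` is a shedding vertex of `lk(σ, K)` because
`lk({v}, lk(σ, K)) = lk(σ, lk({v}, K))`, or `lk(σ, K)` does not contain `v` at all, and deleting
`v` changes nothing.
-/

section

variable {V : Type*} {K : Set (Finset V)} {σ τ ρ : Finset V} {v : V} {d : ℕ}

theorem mem_delV : σ ∈ delV K v ↔ σ ∈ K ∧ v ∉ σ := Iff.rfl

variable [DecidableEq V]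

theorem mem_linkC : τ ∈ linkC K σ ↔ τ ∈ K ∧ Disjoint τ σ ∧ τ ∪ σ ∈ K := by
  rw [Finset.disjoint_iff_inter_eq_empty]
  exact Iff.rfl

theorem IsComplex.mem_linkC_iff (hK : IsComplex K) :
    τ ∈ linkC K σ ↔ Disjoint τ σ ∧ τ ∪ σ ∈ K := by
  rw [mem_linkC, and_iff_right_of_imp]
  exact fun h => hK.2 _ h.2 _ Finset.subset_union_left

theorem IsComplex.singleton_mem_linkC_iff (hK : IsComplex K) :
    {v} ∈ linkC K σ ↔ v ∉ σ ∧ insert v σ ∈ K := by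
  rw [hK.mem_linkC_iff, Finset.disjoint_singleton_left, ← Finset.insert_eq]

theorem IsComplex.mem_linkC_singleton_iff (hK : IsComplex K) :
    σ ∈ linkC K {v} ↔ v ∉ σ ∧ insert v σ ∈ K := by
  rw [hK.mem_linkC_iff, Finset.disjoint_singleton_right, Finset.union_comm, ← Finset.insert_eq]

theorem IsComplex.link (hK : IsComplex K) (hσ : σ ∈ K) : IsComplex (linkC K σ) := by
  refine ⟨hK.mem_linkC_iff.2 ⟨Finset.disjoint_empty_left σ, by rwa [Finset.empty_union]⟩, ?_⟩
  intro τ hτ ρ hρτ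
  obtain ⟨hdisj, hunion⟩ := hK.mem_linkC_iff.1 hτ
  exact hK.mem_linkC_iff.2 ⟨Finset.disjoint_of_subset_left hρτ hdisj,
    hK.2 _ hunion _ (Finset.union_subset_union_left hρτ)⟩

theorem IsComplex.isFacet_union_of_isFacet_linkC (hK : IsComplex K)
    (hτ : IsFacet (linkC K σ) τ) : IsFacet K (τ ∪ σ) := by
  obtain ⟨hdisj, hunion⟩ := hK.mem_linkC_iff.1 hτ.1
  refine ⟨hunion, fun ρ hρ hsub => ?_⟩
  have hρσ : ρ \ σ ∪ σ = ρ :=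
    Finset.sdiff_union_of_subset (Finset.subset_union_right.trans hsub)
  have hmem : ρ \ σ ∈ linkC K σ :=
    hK.mem_linkC_iff.2 ⟨Finset.sdiff_disjoint, by rwa [hρσ]⟩
  have hτρ : τ ⊆ ρ \ σ :=
    Finset.subset_sdiff.2 ⟨Finset.subset_union_left.trans hsub, hdisj⟩
  rw [hτ.2 _ hmem hτρ, hρσ]

theorem PureD.link (hp : PureD K d) (hK : IsComplex K) (σ : Finset V) :
    PureD (linkC K σ) (d - σ.card) := by
  intro τ hτ
  have hcard : (τ ∪ σ).card = d := hp _ (hK.isFacet_union_of_isFacet_linkC hτ)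
  rw [Finset.card_union_of_disjoint (hK.mem_linkC_iff.1 hτ.1).1] at hcard
  exact Nat.eq_sub_of_add_eq hcard

theorem IsSimplexOn.link (h : IsSimplexOn K d) (hσ : σ ∈ K) :
    IsSimplexOn (linkC K σ) (d - σ.card) := by
  obtain ⟨S, rfl, rfl⟩ := h
  have hσS : σ ⊆ S := hσ
  refine ⟨S \ σ, Finset.card_sdiff_of_subset hσS, ?_⟩
  ext τ
  simp only [mem_linkC, Set.mem_ofPred_eq, Finset.subset_sdiff, Finset.union_subset_iff]
  tauto

theorem linkC_comm (K : Set (Finset V)) (σ ρ : Finset V) :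
    linkC (linkC K σ) ρ = linkC (linkC K ρ) σ := by
  ext τ
  simp only [mem_linkC, Finset.disjoint_union_left, Finset.union_right_comm τ ρ σ,
    disjoint_comm (a := ρ) (b := σ)]
  tauto

theorem IsComplex.linkC_linkC (hK : IsComplex K) (h : Disjoint σ ρ) :
    linkC (linkC K σ) ρ = linkC K (σ ∪ ρ) := by
  ext τ
  have hface : τ ∪ (σ ∪ ρ) ∈ K → τ ∪ σ ∈ K := fun hτ =>
    hK.2 _ hτ _ (Finset.union_subset_union_right Finset.subset_union_left)
  rw [mem_linkC]
  simp only [hK.mem_linkC_iff, Finset.disjoint_union_left, Finset.disjoint_union_right,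
    Finset.union_assoc, Finset.union_comm ρ σ, h.symm]
  tauto

theorem IsComplex.linkC_linkC_singleton_erase (hK : IsComplex K) (hv : v ∈ σ) :
    linkC (linkC K {v}) (σ.erase v) = linkC K σ := by
  rw [hK.linkC_linkC (Finset.disjoint_singleton_left.2 (Finset.notMem_erase v σ)),
    ← Finset.insert_eq, Finset.insert_erase hv]

theorem linkC_delV (hv : v ∉ σ) : linkC (delV K v) σ = delV (linkC K σ) v := by
  ext τ
  simp only [mem_linkC, mem_delV, Finset.mem_union]
  tauto

theorem IsComplex.delV_linkC_eq_self (hK : IsComplex K) (hvσ : insert v σ ∉ K) :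
    delV (linkC K σ) v = linkC K σ := by
  refine Set.sep_eq_self_iff_mem_true.2 fun τ hτ hvτ => hvσ (hK.2 _ (mem_linkC.1 hτ).2.2 _ ?_)
  exact Finset.insert_subset (Finset.mem_union_left σ hvτ) Finset.subset_union_right

theorem VD.link (hvd : VD d K) (hσ : σ ∈ K) : VD (d - σ.card) (linkC K σ) := by
  induction hvd generalizing σ with
  | simplex d K hsimplex => exact .simplex _ _ (hsimplex.link hσ)
  | shed d K v hK hp _ _ _ ihdel ihlink =>
    by_cases hvσ : v ∈ σ
    · have herase : σ.erase v ∈ linkC K {v} :=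
        hK.mem_linkC_singleton_iff.2 ⟨Finset.notMem_erase v σ, by rwa [Finset.insert_erase hvσ]⟩
      have hcard : d - 1 - (σ.erase v).card = d - σ.card := by
        rw [Nat.sub_sub, Nat.add_comm, Finset.card_erase_add_one hvσ]
      simpa only [hK.linkC_linkC_singleton_erase hvσ, hcard] using ihlink herase
    · have hdel : VD (d - σ.card) (delV (linkC K σ) v) := linkC_delV hvσ ▸ ihdel ⟨hσ, hvσ⟩
      by_cases hins : insert v σ ∈ K
      · have hlink : VD (d - σ.card - 1) (linkC (linkC K σ) {v}) := by
          rw [linkC_comm, Nat.sub_right_comm]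
          exact ihlink (hK.mem_linkC_singleton_iff.2 ⟨hvσ, hins⟩)
        exact .shed _ _ v (hK.link hσ) (hp.link hK σ)
          (hK.singleton_mem_linkC_iff.2 ⟨hvσ, hins⟩) hdel hlink
      · rwa [hK.delV_linkC_eq_self hins] at hdel

end

/-- The link of a face with `i` elements in a pure `(d-1)`-dimensional
vertex-decomposable complex is a pure `(d-i-1)`-dimensional
vertex-decomposable complex. -/
theorem link_vertexDecomposable {V : Type*} [DecidableEq V]
    (K : Set (Finset V)) (hK : IsComplex K) (d : ℕ) (hp : PureD K d)
    (hvd : VD d K) (σ : Finset V) (hσ : σ ∈ K) :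
    IsComplex (linkC K σ) ∧ PureD (linkC K σ) (d - σ.card) ∧
      VD (d - σ.card) (linkC K σ) :=
  ⟨hK.link hσ, hp.link hK σ, hvd.link hσ⟩
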